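/- arXiv:2603.13550 — 3 statements merged into one kernel-verified Lean document; each statement's English description precedes it below -/
import Mathlib

section
/- Let M = ([n], r) be an avoidance transversal matroid with presentation (S_1,…,S_k), let φ(M) = (F_q^n, ρ) be the transversal q-matroid with presentation (φ(S_1),…,φ(S_k)), and let Z ⊆ [n] be a cyclic flat of M. Then ρ(φ(Z)) = r(Z): the rank of the coordinate subspace φ(Z) in the q-matroid equals the matroid rank of Z. Moreover, if B is a basis of Z in M, then φ(B) is a basis of φ(Z) in φ(M). -/
open Submodule

/-- `X` has an avoidance transversal of the family `A`: an injection `f` from `X`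
into the index type with `x ∉ A (f x)` for all `x ∈ X`. -/
def AvoidsT {α ι : Type*} (A : ι → Set α) (X : Finset α) : Prop :=
  ∃ f : {x // x ∈ X} → ι, Function.Injective f ∧ ∀ x : {x // x ∈ X}, (x : α) ∉ A (f x)

/-- The rank function of the avoidance transversal matroid with presentation `A`:
the maximum size of a subset of `X` admitting an avoidance transversal. -/
noncomputable def atRank {α ι : Type*} (A : ι → Set α) (X : Finset α) : ℕ :=
  sSup {m | ∃ Y : Finset α, Y ⊆ X ∧ AvoidsT A Y ∧ Y.card = m}

/-- `W` is a partial q-transversal of the family of subspaces `X`: every linear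
basis of `W` admits an avoidance transversal of `X`. These are the independent
spaces of the transversal q-matroid with presentation `X`. -/
def IsPartialQT {𝔽 V ι : Type*} [Field 𝔽] [AddCommGroup V] [Module 𝔽 V]
    (X : ι → Submodule 𝔽 V) (W : Submodule 𝔽 V) : Prop :=
  ∀ β : Finset V, (β : Set V) ⊆ (W : Set V) →
    LinearIndependent 𝔽 (fun b : {x // x ∈ β} => (b : V)) →
    span 𝔽 (β : Set V) = W →
    AvoidsT (fun i => ((X i : Submodule 𝔽 V) : Set V)) β

/-- The rank function of the transversal q-matroid with presentation `X`. -/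
noncomputable def qtRank {𝔽 V ι : Type*} [Field 𝔽] [AddCommGroup V] [Module 𝔽 V]
    (X : ι → Submodule 𝔽 V) (W : Submodule 𝔽 V) : ℕ :=
  sSup {d | ∃ U : Submodule 𝔽 V, U ≤ W ∧ IsPartialQT X U ∧ Module.finrank 𝔽 U = d}

/-- The coordinate subspace `φ(S) = span {e_i : i ∈ S}` of `𝔽^n`. -/
def coordSub (𝔽 : Type*) [Field 𝔽] {n : ℕ} (S : Set (Fin n)) : Submodule 𝔽 (Fin n → 𝔽) :=
  span 𝔽 ((fun i => Pi.single i (1 : 𝔽)) '' S)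

/-- The support of a vector: the set of indices of its nonzero coordinates. -/
def suppS {𝔽 : Type*} [Field 𝔽] {n : ℕ} (v : Fin n → 𝔽) : Set (Fin n) := {j | v j ≠ 0}

/-!
Join `x` to the index `i` when `x ∉ S i`, so that an avoidance transversal is a matching. By
Hall's theorem a circuit `C` has fewer than `|C|` neighbours, hence deleting any point of `C`
leaves a set matched onto all neighbours of `C`. Such matchings glue along unions, so the
neighbourhood of a cyclic set `Z` is matched into `Z` and has at most `r(Z)` elements. The
subspaces `φ(Z)` and `φ(S i)` have the same neighbourhood, and it bounds the dimension of every
independent subspace of `φ(Z)`. Conversely, by Hall's theorem again, every linear basis of `φ(B)`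
has an injective choice of coordinates in its supports, so a transversal of `B` induces one of
that basis.
-/

section Avoidance

variable {α ι : Type*} {A : ι → Set α}

theorem AvoidsT.mono {X Y : Finset α} (hY : AvoidsT A Y) (hXY : X ⊆ Y) : AvoidsT A X := by
  obtain ⟨f, hf, hfA⟩ := hY
  exact ⟨fun x => f ⟨x, hXY x.2⟩, fun _ _ hxy => Subtype.ext (Subtype.mk.inj (hf hxy)),
    fun x => hfA ⟨x, hXY x.2⟩⟩

theorem avoidsT_empty (A : ι → Set α) : AvoidsT A ∅ :=
  ⟨isEmptyElim, Function.injective_of_subsingleton _, isEmptyElim⟩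

theorem bddAbove_card_avoidsT (A : ι → Set α) (X : Finset α) :
    BddAbove {m | ∃ Y : Finset α, Y ⊆ X ∧ AvoidsT A Y ∧ Y.card = m} :=
  ⟨X.card, by rintro _ ⟨Y, hYX, _, rfl⟩; exact Finset.card_le_card hYX⟩

theorem AvoidsT.card_le_atRank {X Y : Finset α} (hY : AvoidsT A Y) (hYX : Y ⊆ X) :
    Y.card ≤ atRank A X :=
  le_csSup (bddAbove_card_avoidsT A X) ⟨Y, hYX, hY, rfl⟩

theorem exists_avoidsT_card_eq_atRank (A : ι → Set α) (X : Finset α) :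
    ∃ Y ⊆ X, AvoidsT A Y ∧ Y.card = atRank A X :=
  Nat.sSup_mem (s := {m | ∃ Y ⊆ X, AvoidsT A Y ∧ Y.card = m})
    ⟨0, ∅, X.empty_subset, avoidsT_empty A, rfl⟩ (bddAbove_card_avoidsT A X)

/-- The neighbourhood of `D` in the bipartite graph joining `x` to the index `i` when `x ∉ A i`;
an avoidance transversal of a subset of `D` takes its values here. -/
def avoidanceNbhd (A : ι → Set α) (D : Set α) : Set ι := {i | ¬ D ⊆ A i}

theorem mem_avoidanceNbhd {D : Set α} {i : ι} :
    i ∈ avoidanceNbhd A D ↔ ∃ x ∈ D, x ∉ A i :=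
  Set.not_subset

theorem avoidanceNbhd_mono {D E : Set α} (hDE : D ⊆ E) : avoidanceNbhd A D ⊆ avoidanceNbhd A E :=
  fun _ hD hE => hD (hDE.trans hE)

theorem AvoidsT.card_le_encard_avoidanceNbhd {Y : Finset α} (hY : AvoidsT A Y) :
    (Y.card : ℕ∞) ≤ (avoidanceNbhd A Y).encard := by
  obtain ⟨f, hf, hfA⟩ := hY
  have hrange : Set.range f ⊆ avoidanceNbhd A Y := by
    rintro _ ⟨y, rfl⟩
    exact mem_avoidanceNbhd.2 ⟨y, y.2, hfA y⟩
  calc (Y.card : ℕ∞) = ENat.card Y := by simp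
    _ ≤ (Set.range f).encard := hf.encard_range
    _ ≤ (avoidanceNbhd A Y).encard := Set.encard_le_encard hrange

theorem exists_finset_subset_card_ge_or_eq (s : Set ι) (m : ℕ) :
    ∃ t : Finset ι, (t : Set ι) ⊆ s ∧ (m ≤ t.card ∨ (t : Set ι) = s) := by
  rcases s.finite_or_infinite with hs | hs
  · exact ⟨hs.toFinset, hs.coe_toFinset.subset, .inr hs.coe_toFinset⟩
  · obtain ⟨t, hts, ht⟩ := hs.exists_subset_card_eq m
    exact ⟨t, hts, .inl ht.ge⟩

-- Mathlib's Hall theorem needs finite neighbourhoods; truncating the infinite ones at size `|X|`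
-- preserves Hall's condition.
theorem avoidsT_iff_forall_card_le_encard {X : Finset α} :
    AvoidsT A X ↔ ∀ T ⊆ X, (T.card : ℕ∞) ≤ (avoidanceNbhd A T).encard := by
  classical
  refine ⟨fun hX T hTX => (hX.mono hTX).card_le_encard_avoidanceNbhd, fun hcard => ?_⟩
  choose t htA ht using fun x : {x // x ∈ X} =>
    exists_finset_subset_card_ge_or_eq {i | (x : α) ∉ A i} X.card
  have hall : ∀ T : Finset {x // x ∈ X}, T.card ≤ (T.biUnion t).card := by
    intro T
    by_cases hlarge : ∃ x ∈ T, X.card ≤ (t x).card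
    · obtain ⟨x, hxT, hx⟩ := hlarge
      calc T.card ≤ X.card := by simpa using T.card_le_univ
        _ ≤ (t x).card := hx
        _ ≤ (T.biUnion t).card := Finset.card_le_card (Finset.subset_biUnion_of_mem t hxT)
    · have hexact : ∀ x ∈ T, (t x : Set ι) = {i | (x : α) ∉ A i} := fun x hxT =>
        (ht x).resolve_left fun hx => hlarge ⟨x, hxT, hx⟩
      have hnbhd : avoidanceNbhd A (T.map (.subtype _) : Finset α) = T.biUnion t := by
        ext i
        simp only [mem_avoidanceNbhd, Finset.coe_biUnion, Set.mem_iUnion]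
        constructor
        · rintro ⟨_, hx, hxi⟩
          obtain ⟨x, hxT, rfl⟩ := Finset.mem_map.1 hx
          exact ⟨x, hxT, (hexact x hxT).ge hxi⟩
        · rintro ⟨x, hxT, hxi⟩
          exact ⟨x, Finset.mem_map_of_mem _ hxT, htA x hxi⟩
      have hT := hcard (T.map (.subtype _)) (Finset.map_subtype_subset T)
      rw [hnbhd, Set.encard_coe_eq_coe_finsetCard, Finset.card_map] at hT
      exact_mod_cast hT
  obtain ⟨f, hf, hft⟩ := (Finset.all_card_le_biUnion_card_iff_exists_injective t).1 hall
  exact ⟨f, hf, fun x => htA x (hft x)⟩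

/-- The avoidance neighbourhood of `D` can be matched into `D` along the avoidance relation. -/
def NbhdMatched (A : ι → Set α) (D : Set α) : Prop :=
  ∃ g : avoidanceNbhd A D → α, Function.Injective g ∧ ∀ i, g i ∈ D ∧ g i ∉ A i

-- Well-order the index type and match each `i` inside the first `D j` that has it as a neighbour.
-- If two indices get the same partner `x`, both are neighbours of any `D j` containing `x`, so they
-- were matched inside the same `D j`.
theorem NbhdMatched.iUnion {J : Type*} {D : J → Set α} (hD : ∀ j, NbhdMatched A (D j)) :
    NbhdMatched A (⋃ j, D j) := by
  choose g hg hgA using hD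
  obtain ⟨_, _⟩ := exists_wellFoundedLT J
  have exists_first : ∀ i : avoidanceNbhd A (⋃ j, D j),
      ∃ j, Minimal (fun j => (i : ι) ∈ avoidanceNbhd A (D j)) j := by
    rintro ⟨i, hi⟩
    obtain ⟨x, hx, hxi⟩ := mem_avoidanceNbhd.1 hi
    obtain ⟨j, hxj⟩ := Set.mem_iUnion.1 hx
    exact exists_minimal_of_wellFoundedLT _ ⟨j, mem_avoidanceNbhd.2 ⟨x, hxj, hxi⟩⟩
  choose first hfirst using exists_first
  let partner (i : avoidanceNbhd A (⋃ j, D j)) : α := g (first i) ⟨i, (hfirst i).prop⟩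
  have partner_spec : ∀ i, partner i ∈ D (first i) ∧ partner i ∉ A i := fun i => hgA _ _
  have first_le : ∀ i i', partner i = partner i' → first i' ≤ first i := fun i i' h =>
    not_lt.1 fun hlt => (hfirst i').not_prop_of_lt hlt <| mem_avoidanceNbhd.2
      ⟨partner i, (partner_spec i).1, h ▸ (partner_spec i').2⟩
  have inj_of_eq : ∀ i i' j j' (hj : i ∈ avoidanceNbhd A (D j)) (hj' : i' ∈ avoidanceNbhd A (D j')),
      j = j' → g j ⟨i, hj⟩ = g j' ⟨i', hj'⟩ → i = i' := by
    rintro i i' j _ hj hj' rfl h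
    exact congrArg Subtype.val (hg j h)
  refine ⟨partner, fun i i' h => Subtype.ext ?_, fun i =>
    ⟨Set.mem_iUnion.2 ⟨first i, (partner_spec i).1⟩, (partner_spec i).2⟩⟩
  exact inj_of_eq _ _ _ _ _ _ ((first_le i' i h.symm).antisymm (first_le i i' h)) h

theorem encard_avoidanceNbhd_lt_card_of_minimal {C : Finset α}
    (hC : Minimal (fun X => ¬ AvoidsT A X) C) : (avoidanceNbhd A C).encard < C.card := by
  by_contra! hle
  refine hC.prop (avoidsT_iff_forall_card_le_encard.2 fun T hTC => ?_)
  rcases hTC.eq_or_ssubset with rfl | hTC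
  · exact hle
  · exact (not_not.1 (hC.not_prop_of_lt hTC)).card_le_encard_avoidanceNbhd

theorem nbhdMatched_of_minimal_not_avoidsT {C : Finset α}
    (hC : Minimal (fun X => ¬ AvoidsT A X) C) : NbhdMatched A C := by
  classical
  have hlt := encard_avoidanceNbhd_lt_card_of_minimal hC
  obtain ⟨z, hz⟩ : C.Nonempty :=
    Finset.nonempty_iff_ne_empty.2 fun h => hC.prop (h ▸ avoidsT_empty A)
  obtain ⟨f, hf, hfA⟩ := not_not.1 (hC.not_prop_of_lt (Finset.erase_ssubset hz))
  let F (x : {x // x ∈ C.erase z}) : avoidanceNbhd A C :=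
    ⟨f x, mem_avoidanceNbhd.2 ⟨x, Finset.mem_of_mem_erase x.2, hfA x⟩⟩
  have hF : Function.Injective F := fun _ _ hxy => hf (congrArg Subtype.val hxy)
  have hfin : (avoidanceNbhd A C).Finite := Set.finite_of_encard_le_coe hlt.le
  have : Finite (avoidanceNbhd A C) := hfin
  have hcard : Nat.card (avoidanceNbhd A C) ≤ Nat.card {x // x ∈ C.erase z} := by
    rw [← hfin.cast_ncard_eq, Nat.cast_lt] at hlt
    rw [Nat.card_coe_set_eq, Nat.card_eq_fintype_card, Fintype.card_coe,
      Finset.card_erase_of_mem hz]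
    exact Nat.le_sub_one_of_lt hlt
  let e := Equiv.ofBijective F (hF.bijective_of_nat_card_le hcard)
  have f_symm : ∀ i, f (e.symm i) = i := fun i => congrArg Subtype.val (e.apply_symm_apply i)
  exact ⟨fun i => e.symm i, Subtype.val_injective.comp e.symm.injective, fun i =>
    ⟨Finset.mem_of_mem_erase (e.symm i).2, by simpa only [f_symm] using hfA (e.symm i)⟩⟩

theorem nbhdMatched_of_forall_mem_circuit {Z : Set α}
    (hZ : ∀ z ∈ Z, ∃ C : Finset α, (C : Set α) ⊆ Z ∧ z ∈ C ∧
      Minimal (fun X => ¬ AvoidsT A X) C) : NbhdMatched A Z := by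
  choose! C hCZ hzC hC using hZ
  have hunion : Z = ⋃ z : Z, (C z : Set α) :=
    Set.Subset.antisymm (fun z hz => Set.mem_iUnion.2 ⟨⟨z, hz⟩, hzC z hz⟩)
      (Set.iUnion_subset fun z => hCZ z z.2)
  rw [hunion]
  exact NbhdMatched.iUnion fun z => nbhdMatched_of_minimal_not_avoidsT (hC z z.2)

theorem NbhdMatched.encard_le_atRank {Z : Finset α} (hZ : NbhdMatched A Z) :
    (avoidanceNbhd A Z).encard ≤ atRank A Z := by
  obtain ⟨g, hg, hgA⟩ := hZ
  have hrange : Set.range g ⊆ Z := Set.range_subset_iff.2 fun i => (hgA i).1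
  obtain ⟨Y, hY⟩ := (Z.finite_toSet.subset hrange).exists_finset_coe
  have hYg : ∀ y : {y // y ∈ Y}, ∃ i, g i = y := fun y => hY.subset y.2
  choose f hf using hYg
  have hYA : AvoidsT A Y := by
    refine ⟨fun y => f y, fun y y' h => ?_, fun y => hf y ▸ (hgA (f y)).2⟩
    rw [← Subtype.coe_inj, ← hf y, ← hf y', Subtype.ext h]
  calc (avoidanceNbhd A Z).encard ≤ (Set.range g).encard := hg.encard_range
    _ = Y.card := by rw [← hY, Set.encard_coe_eq_coe_finsetCard]
    _ ≤ atRank A Z := by exact_mod_cast hYA.card_le_atRank (Finset.coe_subset.1 (hY ▸ hrange))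

end Avoidance

section QTransversal

variable {𝔽 V ι : Type*} [Field 𝔽] [AddCommGroup V] [Module 𝔽 V] {X : ι → Submodule 𝔽 V}
  {U W : Submodule 𝔽 V}

theorem IsPartialQT.finrank_le_encard_avoidanceNbhd [FiniteDimensional 𝔽 U]
    (hU : IsPartialQT X U) (hUW : U ≤ W) :
    (Module.finrank 𝔽 U : ℕ∞) ≤ (avoidanceNbhd (fun i => (X i : Set V)) W).encard := by
  have : FiniteDimensional 𝔽 (span 𝔽 (U : Set V)) := by rwa [span_eq]
  obtain ⟨β, hβU, hcard, hspan, hli⟩ := exists_finset_span_eq_linearIndepOn 𝔽 (U : Set V)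
  rw [span_eq] at hcard hspan
  rw [← hcard]
  exact (hU β hβU hli hspan).card_le_encard_avoidanceNbhd.trans
    (Set.encard_le_encard (avoidanceNbhd_mono (hβU.trans hUW)))

theorem IsPartialQT.finrank_le_qtRank [FiniteDimensional 𝔽 W] (hU : IsPartialQT X U)
    (hUW : U ≤ W) : Module.finrank 𝔽 U ≤ qtRank X W := by
  refine le_csSup ⟨Module.finrank 𝔽 W, ?_⟩ ⟨U, hUW, hU, rfl⟩
  rintro _ ⟨U', hU'W, _, rfl⟩
  exact finrank_mono hU'W

theorem qtRank_le {m : ℕ} (h : ∀ U ≤ W, IsPartialQT X U → Module.finrank 𝔽 U ≤ m) :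
    qtRank X W ≤ m :=
  csSup_le' <| by rintro _ ⟨U, hUW, hU, rfl⟩; exact h U hUW hU

end QTransversal

section CoordinateSubspace

variable {𝔽 : Type*} [Field 𝔽] {n : ℕ} {ι : Type*}

theorem mem_coordSub {S : Set (Fin n)} {v : Fin n → 𝔽} : v ∈ coordSub 𝔽 S ↔ suppS v ⊆ S := by
  have h := (Pi.basisFun 𝔽 (Fin n)).mem_span_image (m := v) (s := S)
  simpa [Set.subset_def, coordSub, suppS] using h

theorem coordSub_le_coordSub_iff {S T : Set (Fin n)} :
    coordSub 𝔽 S ≤ coordSub 𝔽 T ↔ S ⊆ T := by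
  refine ⟨fun h i hi => ?_, fun h => span_mono (Set.image_mono h)⟩
  have hsingle : Pi.single i (1 : 𝔽) ∈ coordSub 𝔽 T := h (subset_span ⟨i, hi, rfl⟩)
  exact mem_coordSub.1 hsingle (by simp [suppS])

theorem avoidanceNbhd_coordSub (S : ι → Set (Fin n)) (D : Set (Fin n)) :
    avoidanceNbhd (fun i => (coordSub 𝔽 (S i) : Set (Fin n → 𝔽))) (coordSub 𝔽 D) =
      avoidanceNbhd S D :=
  Set.ext fun _ => not_congr coordSub_le_coordSub_iff

theorem finrank_coordSub (S : Set (Fin n)) : Module.finrank 𝔽 (coordSub 𝔽 S) = S.ncard := by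
  classical
  have hli : LinearIndependent 𝔽 fun i : S => (Pi.single (i : Fin n) (1 : 𝔽) : Fin n → 𝔽) := by
    simpa [Function.comp_def] using
      (Pi.basisFun 𝔽 (Fin n)).linearIndependent.comp _ (Subtype.val_injective (p := (· ∈ S)))
  rw [coordSub, Set.image_eq_range, finrank_span_eq_card hli, ← Nat.card_eq_fintype_card,
    Nat.card_coe_set_eq]

theorem avoidsT_coordHyperplanes_of_linearIndepOn {β : Finset (Fin n → 𝔽)}
    (hβ : LinearIndepOn 𝔽 id (β : Set (Fin n → 𝔽))) :
    AvoidsT (fun j : Fin n => {v : Fin n → 𝔽 | v j = 0}) β := by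
  refine avoidsT_iff_forall_card_le_encard.2 fun T hTβ => ?_
  set N : Set (Fin n) := avoidanceNbhd (fun j => {v : Fin n → 𝔽 | v j = 0}) T
  have hspan : span 𝔽 (T : Set (Fin n → 𝔽)) ≤ coordSub 𝔽 N :=
    span_le.2 fun v hv => mem_coordSub.2 fun j hj => mem_avoidanceNbhd.2 ⟨v, hv, hj⟩
  have hcard : T.card ≤ N.ncard := by
    rw [← finrank_span_finset_eq_card (hβ.mono (Finset.coe_subset.2 hTβ)),
      ← finrank_coordSub (𝔽 := 𝔽) N]
    exact finrank_mono hspan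
  rw [← N.toFinite.cast_ncard_eq]
  exact_mod_cast hcard

theorem AvoidsT.isPartialQT_coordSub {S : ι → Set (Fin n)} {B : Finset (Fin n)}
    (hB : AvoidsT S B) :
    IsPartialQT (fun i => coordSub 𝔽 (S i)) (coordSub 𝔽 (B : Set (Fin n))) := by
  intro β hβB hli _
  obtain ⟨f, hf, hfS⟩ := hB
  obtain ⟨g, hg, hgβ⟩ := avoidsT_coordHyperplanes_of_linearIndepOn hli
  have hgB : ∀ b, g b ∈ B := fun b => mem_coordSub.1 (hβB b.2) (hgβ b)
  exact ⟨fun b => f ⟨g b, hgB b⟩, fun _ _ h => hg (congrArg Subtype.val (hf h)),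
    fun b hb => hfS ⟨g b, hgB b⟩ (mem_coordSub.1 hb (hgβ b))⟩

theorem NbhdMatched.finrank_le_atRank {S : ι → Set (Fin n)} {Z : Finset (Fin n)}
    (hZ : NbhdMatched S Z) {U : Submodule 𝔽 (Fin n → 𝔽)}
    (hU : IsPartialQT (fun i => coordSub 𝔽 (S i)) U) (hUZ : U ≤ coordSub 𝔽 (Z : Set (Fin n))) :
    Module.finrank 𝔽 U ≤ atRank S Z := by
  have h := hU.finrank_le_encard_avoidanceNbhd hUZ
  rw [avoidanceNbhd_coordSub] at h
  exact_mod_cast h.trans hZ.encard_le_atRank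

theorem NbhdMatched.qtRank_coordSub {S : ι → Set (Fin n)} {Z : Finset (Fin n)}
    (hZ : NbhdMatched S Z) :
    qtRank (fun i => coordSub 𝔽 (S i)) (coordSub 𝔽 (Z : Set (Fin n))) = atRank S Z := by
  refine le_antisymm (qtRank_le fun U hUZ hU => hZ.finrank_le_atRank hU hUZ) ?_
  obtain ⟨B, hBZ, hB, hcard⟩ := exists_avoidsT_card_eq_atRank S Z
  rw [← hcard, ← Set.ncard_coe_finset, ← finrank_coordSub (𝔽 := 𝔽)]
  exact hB.isPartialQT_coordSub.finrank_le_qtRank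
    (coordSub_le_coordSub_iff.2 (Finset.coe_subset.2 hBZ))

end CoordinateSubspace

theorem stmt9_general {𝔽 : Type*} [Field 𝔽] {n : ℕ} {ι : Type*} [DecidableEq (Fin n)]
    (S : ι → Set (Fin n)) (Z : Finset (Fin n))
    (hcyclic : ∀ z ∈ Z, ∃ C ⊆ Z, z ∈ C ∧ ¬ AvoidsT S C ∧ ∀ x ∈ C, AvoidsT S (C.erase x)) :
    qtRank (fun i => coordSub 𝔽 (S i)) (coordSub 𝔽 (Z : Set (Fin n))) = atRank S Z
    ∧ ∀ B ⊆ Z, AvoidsT S B → B.card = atRank S Z →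
        (IsPartialQT (fun i => coordSub 𝔽 (S i)) (coordSub 𝔽 (B : Set (Fin n)))
          ∧ ∀ U : Submodule 𝔽 (Fin n → 𝔽), U ≤ coordSub 𝔽 (Z : Set (Fin n)) →
              IsPartialQT (fun i => coordSub 𝔽 (S i)) U →
              Module.finrank 𝔽 U ≤ Module.finrank 𝔽 (coordSub 𝔽 (B : Set (Fin n)))) := by
  have hmatched : NbhdMatched S Z := nbhdMatched_of_forall_mem_circuit fun z hz => by
    obtain ⟨C, hCZ, hzC, hdep, hmin⟩ := hcyclic z hz
    refine ⟨C, Finset.coe_subset.2 hCZ, hzC, ?_⟩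
    exact (Finset.minimal_iff_forall_erase fun _ _ hY hYX hX => hY (hX.mono hYX)).2
      ⟨hdep, fun x hx => not_not.2 (hmin x hx)⟩
  refine ⟨hmatched.qtRank_coordSub, fun B _ hB hcard => ⟨hB.isPartialQT_coordSub, ?_⟩⟩
  intro U hUZ hU
  rw [finrank_coordSub, Set.ncard_coe_finset, hcard]
  exact hmatched.finrank_le_atRank hU hUZ

/-- for a cyclic flat `Z` of the avoidance transversal matroid,
`ρ(φ(Z)) = r(Z)`, and any basis `B` of `Z` maps to a basis `φ(B)` of `φ(Z)` in the
transversal q-matroid. A cyclic flat is a flat each of whose elements lies in a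
circuit (minimal dependent set) contained in it. -/
theorem stmt9 {𝔽 : Type*} [Field 𝔽] [Fintype 𝔽] {n k : ℕ} [DecidableEq (Fin n)]
    (S : Fin k → Set (Fin n)) (Z : Finset (Fin n))
    (hflat : ∀ j ∉ Z, atRank S Z < atRank S (insert j Z))
    (hcyclic : ∀ z ∈ Z, ∃ C ⊆ Z, z ∈ C ∧ ¬ AvoidsT S C ∧ ∀ x ∈ C, AvoidsT S (C.erase x)) :
    qtRank (fun i => coordSub 𝔽 (S i)) (coordSub 𝔽 (Z : Set (Fin n))) = atRank S Z
    ∧ ∀ B ⊆ Z, AvoidsT S B → B.card = atRank S Z →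
        (IsPartialQT (fun i => coordSub 𝔽 (S i)) (coordSub 𝔽 (B : Set (Fin n)))
          ∧ ∀ U : Submodule 𝔽 (Fin n → 𝔽), U ≤ coordSub 𝔽 (Z : Set (Fin n)) →
              IsPartialQT (fun i => coordSub 𝔽 (S i)) U →
              Module.finrank 𝔽 U ≤ Module.finrank 𝔽 (coordSub 𝔽 (B : Set (Fin n)))) :=
  stmt9_general S Z hcyclic
end

section
/- Let M_q be the transversal q-matroid on F_q^6 (q any prime power) with presentation X = (⟨e_1,e_2,e_3⟩, ⟨e_4,e_5,e_6⟩, ⟨e_1+e_4, e_2+e_5, e_3+e_6⟩). Then each of the three subspaces ⟨e_1,e_2,e_3⟩, ⟨e_4,e_5,e_6⟩, ⟨e_1+e_4, e_2+e_5, e_3+e_6⟩ is a cyclic space of M_q: each is dependent in M_q, while each of its hyperplanes is independent. -/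
open Submodule

/-!
The three members of the presentation are pairwise disjoint subspaces whose dimension equals their
number. A subspace `U` contained in `X m` meets every other member trivially, so a basis of `U` can
be sent injectively to any indices other than `m`, and to no others: `U` is independent exactly when
`dim U < 3`. For disjointness, write the presentation as `(⟨u⟩, ⟨w⟩, ⟨u + w⟩)` with `u, w` jointly
linearly independent; modulo `⟨u⟩` the families `w` and `u + w` agree, so `u, u + w` are jointly
linearly independent too, and by symmetry so are `w, u + w`.
-/

section Avoidance

variable {α ι : Type*} {A : ι → Set α} {B : Finset α} {s : Finset ι}

theorem AvoidsT.card_le (h : AvoidsT A B) (hs : ∀ i ∉ s, (B : Set α) ⊆ A i) :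
    B.card ≤ s.card := by
  obtain ⟨f, f_inj, f_avoids⟩ := h
  have f_mem (x : {x // x ∈ B}) : f x ∈ s := by
    by_contra hx
    exact f_avoids x (hs _ hx x.2)
  simpa using Finset.card_le_card_of_injOn (s := B.attach) f (fun x _ => f_mem x) f_inj.injOn

theorem avoidsT_of_disjoint (hs : ∀ i ∈ s, Disjoint (B : Set α) (A i))
    (hcard : B.card ≤ s.card) : AvoidsT A B := by
  obtain ⟨g⟩ : Nonempty ({x // x ∈ B} ↪ {i // i ∈ s}) :=
    Function.Embedding.nonempty_of_card_le (by simpa using hcard)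
  exact ⟨fun x => g x, Subtype.val_injective.comp g.injective,
    fun x => Set.disjoint_left.1 (hs _ (g x).2) x.2⟩

end Avoidance

section PartialQT

variable {𝔽 V ι : Type*} [Field 𝔽] [AddCommGroup V] [Module 𝔽 V]
  {X : ι → Submodule 𝔽 V} {U : Submodule 𝔽 V} {s : Finset ι}

theorem IsPartialQT.finrank_le_card [FiniteDimensional 𝔽 U] (hU : IsPartialQT X U)
    (hs : ∀ i ∉ s, U ≤ X i) : Module.finrank 𝔽 U ≤ s.card := by
  have : FiniteDimensional 𝔽 (span 𝔽 (U : Set V)) := by rwa [span_eq]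
  obtain ⟨β, hβU, hβcard, hβspan, hβ⟩ := exists_finset_span_eq_linearIndepOn 𝔽 (U : Set V)
  rw [span_eq] at hβcard hβspan
  rw [← hβcard]
  exact (hU β hβU hβ hβspan).card_le fun i hi => hβU.trans (hs i hi)

theorem isPartialQT_of_disjoint (hs : ∀ i ∈ s, Disjoint U (X i))
    (hrank : Module.finrank 𝔽 U ≤ s.card) : IsPartialQT X U := by
  intro β hβU hβ hβspan
  have hβcard : β.card = Module.finrank 𝔽 U := by
    rw [← hβspan, finrank_span_finset_eq_card hβ]
  refine avoidsT_of_disjoint (fun i hi => Set.disjoint_left.2 fun b hb hbX => ?_)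
    (hβcard.trans_le hrank)
  exact hβ.ne_zero ⟨b, hb⟩ (disjoint_def.1 (hs i hi) b (hβU hb) hbX)

theorem isPartialQT_iff_finrank_lt_card [Fintype ι] [FiniteDimensional 𝔽 U]
    (hX : Pairwise (Function.onFun Disjoint X)) {m : ι} (hU : U ≤ X m) :
    IsPartialQT X U ↔ Module.finrank 𝔽 U < Fintype.card ι := by
  classical
  have card_erase : (Finset.univ.erase m).card + 1 = Fintype.card ι :=
    Finset.card_erase_add_one (Finset.mem_univ m)
  rw [← card_erase, Nat.lt_succ_iff]
  refine ⟨fun h => h.finrank_le_card fun i hi => ?_, isPartialQT_of_disjoint fun i hi => ?_⟩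
  · obtain rfl : i = m := by simpa using hi
    exact hU
  · exact (hX (Finset.ne_of_mem_erase hi).symm).mono_left hU

end PartialQT

section SumPresentation

variable {R M ι : Type*} [Ring R] [AddCommGroup M] [Module R M] {u w : ι → M}

theorem linearIndependent_sumElim_add (h : LinearIndependent R (Sum.elim u w)) :
    LinearIndependent R (Sum.elim u (u + w)) := by
  obtain ⟨hu, hw, huw⟩ := linearIndependent_sum.1 h
  rw [Sum.elim_comp_inl] at hu huw
  rw [Sum.elim_comp_inr] at hw huw
  let π := (span R (Set.range u)).mkQ
  have π_add : π ∘ (u + w) = π ∘ w := by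
    ext i
    have : π (u i) = 0 := (Quotient.mk_eq_zero _).2 (subset_span (Set.mem_range_self i))
    simp [this]
  have π_indep : LinearIndependent R (π ∘ (u + w)) :=
    π_add ▸ hw.map (by simpa [π] using huw.symm)
  have disjoint_ker := range_ker_disjoint π_indep
  rw [ker_mkQ] at disjoint_ker
  exact hu.sum_type (.of_comp π π_indep) disjoint_ker.symm

variable (R u w) in
/-- The presentation `(⟨u⟩, ⟨w⟩, ⟨u + w⟩)` built from two families of vectors with a common index
type; `u + w` is the pointwise sum. -/
def sumPresentation : Fin 3 → Submodule R M :=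
  ![span R (Set.range u), span R (Set.range w), span R (Set.range (u + w))]

theorem pairwise_disjoint_sumPresentation (h : LinearIndependent R (Sum.elim u w)) :
    Pairwise (Function.onFun Disjoint (sumPresentation R u w)) := by
  have h_swap : LinearIndependent R (Sum.elim w u) := by
    simpa using h.comp _ (Equiv.sumComm ι ι).injective
  have disjoint_u_w : Disjoint (span R (Set.range u)) (span R (Set.range w)) :=
    (linearIndependent_sum.1 h).2.2
  have disjoint_u_add : Disjoint (span R (Set.range u)) (span R (Set.range (u + w))) :=
    (linearIndependent_sum.1 (linearIndependent_sumElim_add h)).2.2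
  have disjoint_w_add : Disjoint (span R (Set.range w)) (span R (Set.range (u + w))) :=
    add_comm w u ▸ (linearIndependent_sum.1 (linearIndependent_sumElim_add h_swap)).2.2
  simp [pairwise_fin_succ_iff_of_isSymm, Fin.forall_fin_succ, Function.onFun, sumPresentation,
    disjoint_u_w, disjoint_u_add, disjoint_w_add]

theorem finrank_sumPresentation [StrongRankCondition R] [Fintype ι]
    (h : LinearIndependent R (Sum.elim u w)) (m : Fin 3) :
    Module.finrank R (sumPresentation R u w m) = Fintype.card ι := by
  have := nontrivial_of_invariantBasisNumber R
  fin_cases m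
  · exact finrank_span_eq_card (linearIndependent_sum.1 h).1
  · exact finrank_span_eq_card (linearIndependent_sum.1 h).2.1
  · exact finrank_span_eq_card (linearIndependent_sum.1 (linearIndependent_sumElim_add h)).2.1

end SumPresentation

theorem range_fin_three {α : Type*} (f : Fin 3 → α) : Set.range f = {f 0, f 1, f 2} := by
  ext x
  simp [Fin.exists_fin_succ, eq_comm]

theorem stmt14_general {𝔽 V : Type*} [Field 𝔽] [AddCommGroup V] [Module 𝔽 V] {e : Fin 6 → V}
    (he : LinearIndependent 𝔽 e) :
    let X₁ : Submodule 𝔽 V := span 𝔽 {e 0, e 1, e 2}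
    let X₂ : Submodule 𝔽 V := span 𝔽 {e 3, e 4, e 5}
    let X₃ : Submodule 𝔽 V := span 𝔽 {e 0 + e 3, e 1 + e 4, e 2 + e 5}
    let pres : Fin 3 → Submodule 𝔽 V := ![X₁, X₂, X₃]
    ∀ m : Fin 3,
      ¬ IsPartialQT pres (pres m)
      ∧ ∀ H : Submodule 𝔽 V, H ≤ pres m →
          Module.finrank 𝔽 H + 1 = Module.finrank 𝔽 (pres m) →
          IsPartialQT pres H := by
  intro X₁ X₂ X₃ pres m
  let u : Fin 3 → V := e ∘ Fin.castAdd 3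
  let w : Fin 3 → V := e ∘ Fin.natAdd 3
  have huw : LinearIndependent 𝔽 (Sum.elim u w) := by
    convert! he.comp _ (finSumFinEquiv (m := 3) (n := 3)).injective using 1
    ext (i | i) <;> rfl
  have pres_eq : pres = sumPresentation 𝔽 u w := by
    simp only [sumPresentation, range_fin_three]
    rfl
  have disjoint_pres : Pairwise (Function.onFun Disjoint pres) :=
    pres_eq ▸ pairwise_disjoint_sumPresentation huw
  have finrank_pres : Module.finrank 𝔽 (pres m) = 3 :=
    pres_eq ▸ finrank_sumPresentation huw m
  have : FiniteDimensional 𝔽 (pres m) := .of_finrank_pos (by lia)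
  refine ⟨?_, fun H hH hrank => ?_⟩
  · simp [isPartialQT_iff_finrank_lt_card disjoint_pres le_rfl, finrank_pres]
  · have := finiteDimensional_of_le hH
    rw [isPartialQT_iff_finrank_lt_card disjoint_pres hH, Fintype.card_fin]
    lia

/-- in the transversal q-matroid on `𝔽_q^6` with presentation
`(⟨e₁,e₂,e₃⟩, ⟨e₄,e₅,e₆⟩, ⟨e₁+e₄, e₂+e₅, e₃+e₆⟩)`, each member of the presentation
is a cyclic space: it is dependent, while every hyperplane of it is independent. -/
theorem stmt14 {𝔽 : Type*} [Field 𝔽] [Fintype 𝔽] :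
    let e : Fin 6 → (Fin 6 → 𝔽) := fun i => Pi.single i 1
    let X₁ : Submodule 𝔽 (Fin 6 → 𝔽) := span 𝔽 {e 0, e 1, e 2}
    let X₂ : Submodule 𝔽 (Fin 6 → 𝔽) := span 𝔽 {e 3, e 4, e 5}
    let X₃ : Submodule 𝔽 (Fin 6 → 𝔽) := span 𝔽 {e 0 + e 3, e 1 + e 4, e 2 + e 5}
    let pres : Fin 3 → Submodule 𝔽 (Fin 6 → 𝔽) := ![X₁, X₂, X₃]
    ∀ m : Fin 3,
      ¬ IsPartialQT pres (pres m)
      ∧ ∀ H : Submodule 𝔽 (Fin 6 → 𝔽), H ≤ pres m →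
          Module.finrank 𝔽 H + 1 = Module.finrank 𝔽 (pres m) →
          IsPartialQT pres H := by
  intro e
  exact stmt14_general (Pi.linearIndependent_single_one (Fin 6) 𝔽)
end

section
/- Let M_1, M_2 be uniform q-matroids (over the same finite field). Then the direct sum M_1 ⊕ M_2, when both M_1 and M_2 are regarded as coordinate transversal q-matroids, is a transversal q-matroid: specifically, the uniform q-matroid U_{r,n} is the transversal q-matroid with presentation consisting of r copies of the zero subspace of F_q^n, and the direct sum U_{r_1,n_1} ⊕ U_{r_2,n_2} is the transversal q-matroid with presentation (0⊕F_q^{n_2} repeated r_1 times, F_q^{n_1}⊕0 repeated r_2 times). -/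
open Submodule

/-!
By Hall's theorem, a subspace `U` is independent in the transversal q-matroid of a family `(X i)`
if and only if `dim S + |J| ≤ |ι|` whenever `S ≤ U` lies in `X i` for all `i ∈ J`: a basis of `U`
extending one of `S` is the hardest to match. Let `f` and `g` be the two projections of the direct
sum and put `ρ(Y) = min (dim f(Y)) r + min (dim g(Y)) s`. For the presentation by `r` copies of
`ker f` and `s` copies of `ker g`, the criterion collapses to `dim U ≤ ρ(U)`.

Both sides of the rank identity equal `min (dim X) (ρ(X))`. In the direct sum, `Y = ⊥` and `Y = X`
already attain the minimum. In the transversal q-matroid, as long as `ρ(X) < dim X` there is a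
hyperplane of `X` with the same `ρ`, namely one that contains neither `X ⊓ ker f` nor `X ⊓ ker g`
(where these are nonzero); descending through such hyperplanes ends in an independent space.
-/

open Module

theorem avoidsT_iff_forall_card_add_card_le {α ι : Type*} [Fintype ι] {A : ι → Set α}
    {β : Finset α} :
    AvoidsT A β ↔ ∀ σ ⊆ β, ∀ J : Finset ι, (∀ i ∈ J, (σ : Set α) ⊆ A i) →
      σ.card + J.card ≤ Fintype.card ι := by
  classical
  constructor
  · rintro ⟨f, hf, hfA⟩ σ hσ J hJ
    let image : Finset ι := σ.attach.image fun x : {x // x ∈ σ} => f ⟨x, hσ x.2⟩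
    have card_image : image.card = σ.card := by
      refine (Finset.card_image_of_injective _ fun x y hxy => ?_).trans σ.card_attach
      exact Subtype.ext (Subtype.mk.inj (hf hxy))
    have disjoint_image : Disjoint image J := by
      refine Finset.disjoint_left.2 fun i hi hiJ => ?_
      obtain ⟨x, -, rfl⟩ := Finset.mem_image.1 hi
      exact hfA _ (hJ _ hiJ x.2)
    rw [← card_image, ← Finset.card_union_of_disjoint disjoint_image]
    exact Finset.card_le_univ _
  · intro h
    refine (Fintype.all_card_le_filter_rel_iff_exists_injective
      fun (x : {x // x ∈ β}) i => (x : α) ∉ A i).1 fun s => ?_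
    let available : Finset ι := {i | ∃ x ∈ s, (x : α) ∉ A i}
    have subset_of_notMem_available : ∀ i ∈ availableᶜ,
        ((s.map (Function.Embedding.subtype _) : Finset α) : Set α) ⊆ A i := by
      simp [available, Set.subset_def]
    have hs := h _ (Finset.map_subtype_subset s) availableᶜ subset_of_notMem_available
    rw [Finset.card_map, ← Finset.card_compl_add_card available] at hs
    change s.card ≤ available.card
    omega

theorem exists_dual_apply_ne_zero_and_apply_ne_zero {K V : Type*} [Field K] [AddCommGroup V]
    [Module K V] {a b : V} (ha : a ≠ 0) (hb : b ≠ 0) :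
    ∃ φ : Dual K V, φ a ≠ 0 ∧ φ b ≠ 0 := by
  obtain ⟨φ, hφa⟩ := Projective.exists_dual_ne_zero K ha
  obtain ⟨ψ, hψb⟩ := Projective.exists_dual_ne_zero K hb
  by_cases hφb : φ b = 0
  · by_cases hψa : ψ a = 0
    · exact ⟨φ + ψ, by simp [hψa, hφa], by simp [hφb, hψb]⟩
    · exact ⟨ψ, hψa, hψb⟩
  · exact ⟨φ, hφa, hφb⟩

section FiniteDimensional

variable {K V E F : Type*} [Field K] [AddCommGroup V] [Module K V] [FiniteDimensional K V]
  [AddCommGroup E] [Module K E] [AddCommGroup F] [Module K F]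

theorem exists_finset_basis_extending {S U : Submodule K V} (hSU : S ≤ U) :
    ∃ σ β : Finset V, σ ⊆ β ∧ (σ : Set V) ⊆ S ∧ σ.card = finrank K S ∧
      LinearIndepOn K id (β : Set V) ∧ span K (β : Set V) = U := by
  obtain ⟨σ, hσS, hσcard, -, hσ⟩ := exists_finset_span_eq_linearIndepOn K (S : Set V)
  obtain ⟨b, hbU, hσb, hUb, hb⟩ := exists_linearIndepOn_id_extension hσ (hσS.trans hSU)
  lift b to Finset V using hb.linearIndependent.setFinite
  exact ⟨σ, b, Finset.coe_subset.1 hσb, hσS, by rw [hσcard, span_eq], hb,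
    le_antisymm (span_le.2 hbU) hUb⟩

theorem isPartialQT_iff_forall_finrank_add_card_le {ι : Type*} [Fintype ι]
    {X : ι → Submodule K V} {U : Submodule K V} :
    IsPartialQT X U ↔ ∀ S ≤ U, ∀ J : Finset ι, (∀ i ∈ J, S ≤ X i) →
      finrank K S + J.card ≤ Fintype.card ι := by
  constructor
  · intro h S hSU J hSJ
    obtain ⟨σ, β, hσβ, hσS, hσcard, hβ, hβU⟩ := exists_finset_basis_extending hSU
    have hβX := h β (hβU ▸ subset_span) hβ hβU
    rw [← hσcard]
    exact avoidsT_iff_forall_card_add_card_le.1 hβX σ hσβ J fun i hi => hσS.trans (hSJ i hi)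
  · intro h β hβU hβ _
    refine avoidsT_iff_forall_card_add_card_le.2 fun σ hσβ J hσJ => ?_
    have hσ : LinearIndepOn K id (σ : Set V) := LinearIndepOn.mono hβ hσβ
    rw [← finrank_span_finset_eq_card hσ]
    exact h _ (span_le.2 (Set.Subset.trans hσβ hβU)) J fun i hi => span_le.2 (hσJ i hi)

theorem isPartialQT_bot_iff {ι : Type*} [Fintype ι] {U : Submodule K V} :
    IsPartialQT (fun _ : ι => (⊥ : Submodule K V)) U ↔ finrank K U ≤ Fintype.card ι := by
  rw [isPartialQT_iff_forall_finrank_add_card_le]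
  refine ⟨fun h => by simpa using h U le_rfl ∅ (by simp), fun h S hSU J hSJ => ?_⟩
  obtain rfl | ⟨i, hi⟩ := J.eq_empty_or_nonempty
  · simpa using (finrank_mono hSU).trans h
  · obtain rfl := le_bot_iff.1 (hSJ i hi)
    simpa using J.card_le_univ

theorem finrank_map_add_finrank_inf_ker (f : V →ₗ[K] E) (Y : Submodule K V) :
    finrank K (Y.map f) + finrank K ↥(Y ⊓ LinearMap.ker f) = finrank K Y := by
  rw [← LinearMap.finrank_range_add_finrank_ker (f.domRestrict Y), LinearMap.range_domRestrict,
    LinearMap.ker_domRestrict, ← map_comap_subtype, finrank_map_subtype_eq]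

theorem finrank_le_finrank_map_add_finrank_map {f : V →ₗ[K] E} {g : V →ₗ[K] F}
    (hfg : Disjoint (LinearMap.ker f) (LinearMap.ker g)) (Y : Submodule K V) :
    finrank K Y ≤ finrank K (Y.map f) + finrank K (Y.map g) := by
  have hf := finrank_map_add_finrank_inf_ker f Y
  have hg := finrank_map_add_finrank_inf_ker g Y
  have hsup := finrank_sup_add_finrank_inf_eq (Y ⊓ LinearMap.ker f) (Y ⊓ LinearMap.ker g)
  have hle := finrank_mono (sup_le inf_le_left inf_le_left :
    Y ⊓ LinearMap.ker f ⊔ Y ⊓ LinearMap.ker g ≤ Y)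
  rw [(hfg.mono inf_le_right inf_le_right).eq_bot, finrank_bot] at hsup
  omega

theorem finrank_add_finrank_map_le {X Y : Submodule K V} (hYX : Y ≤ X) (f : V →ₗ[K] E) :
    finrank K Y + finrank K (X.map f) ≤ finrank K X + finrank K (Y.map f) := by
  have hX := finrank_map_add_finrank_inf_ker f X
  have hY := finrank_map_add_finrank_inf_ker f Y
  have hker := finrank_mono (inf_le_inf_right (LinearMap.ker f) hYX)
  omega

/-- The function `Y ↦ ρ₁(f(Y)) + ρ₂(g(Y))`, where `ρ₁` and `ρ₂` are the rank functions of the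
uniform q-matroids of ranks `r` and `s`. The rank of `X` in their direct sum is the minimum over
`Y ≤ X` of this function plus `dim X - dim Y`, with `f` and `g` the two projections. -/
noncomputable def uniformImageRank (f : V →ₗ[K] E) (g : V →ₗ[K] F) (r s : ℕ)
    (Y : Submodule K V) : ℕ :=
  min (finrank K (Y.map f)) r + min (finrank K (Y.map g)) s

namespace uniformImageRank

variable {f : V →ₗ[K] E} {g : V →ₗ[K] F} {r s : ℕ}

theorem mono {X Y : Submodule K V} (hYX : Y ≤ X) :
    uniformImageRank f g r s Y ≤ uniformImageRank f g r s X :=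
  add_le_add (min_le_min_right r (finrank_mono (map_mono hYX)))
    (min_le_min_right s (finrank_mono (map_mono hYX)))

theorem min_finrank_le (hfg : Disjoint (LinearMap.ker f) (LinearMap.ker g))
    {X Y : Submodule K V} (hYX : Y ≤ X) :
    min (finrank K X) (uniformImageRank f g r s X) ≤
      uniformImageRank f g r s Y + (finrank K X - finrank K Y) := by
  have hY := finrank_le_finrank_map_add_finrank_map hfg Y
  have hdim := finrank_mono hYX
  have hf := finrank_add_finrank_map_le hYX f
  have hg := finrank_add_finrank_map_le hYX g
  unfold uniformImageRank
  omega

theorem sInf_add_finrank_sub_eq (hfg : Disjoint (LinearMap.ker f) (LinearMap.ker g))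
    (X : Submodule K V) :
    sInf {m | ∃ Y ≤ X, m = uniformImageRank f g r s Y + (finrank K X - finrank K Y)} =
      min (finrank K X) (uniformImageRank f g r s X) := by
  refine IsLeast.csInf_eq ⟨?_, ?_⟩
  · obtain h | h := min_choice (finrank K X) (uniformImageRank f g r s X) <;> rw [h]
    · exact ⟨⊥, bot_le, by simp [uniformImageRank]⟩
    · exact ⟨X, le_rfl, by simp⟩
  · rintro _ ⟨Y, hYX, rfl⟩
    exact min_finrank_le hfg hYX

end uniformImageRank

theorem isPartialQT_sumElim_ker_iff {ι κ : Type*} [Fintype ι] [Fintype κ] {f : V →ₗ[K] E}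
    {g : V →ₗ[K] F} (hfg : Disjoint (LinearMap.ker f) (LinearMap.ker g)) {U : Submodule K V} :
    IsPartialQT (Sum.elim (fun _ : ι => LinearMap.ker f) (fun _ : κ => LinearMap.ker g)) U ↔
      finrank K U ≤ uniformImageRank f g (Fintype.card ι) (Fintype.card κ) U := by
  have hf := finrank_map_add_finrank_inf_ker f U
  have hg := finrank_map_add_finrank_inf_ker g U
  simp only [isPartialQT_iff_forall_finrank_add_card_le, Fintype.card_sum, uniformImageRank]
  constructor
  · intro h
    have hU := finrank_le_finrank_map_add_finrank_map hfg U
    have hcard := h U le_rfl ∅ (by simp)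
    have hker_f := h (U ⊓ LinearMap.ker f) inf_le_left (Finset.univ.map .inl) (by simp)
    have hker_g := h (U ⊓ LinearMap.ker g) inf_le_left (Finset.univ.map .inr) (by simp)
    simp only [Finset.card_empty, Finset.card_map, Finset.card_univ] at hcard hker_f hker_g
    omega
  · intro h S hSU J hSJ
    have hJ := J.card_toLeft_add_card_toRight
    have hι := J.toLeft.card_le_univ
    have hκ := J.toRight.card_le_univ
    have hdim := finrank_mono hSU
    have le_ker_f : J.toLeft.Nonempty → S ≤ LinearMap.ker f :=
      fun ⟨_, hi⟩ => hSJ _ (Finset.mem_toLeft.1 hi)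
    have le_ker_g : J.toRight.Nonempty → S ≤ LinearMap.ker g :=
      fun ⟨_, hk⟩ => hSJ _ (Finset.mem_toRight.1 hk)
    obtain hJι | hJι := J.toLeft.eq_empty_or_nonempty <;>
      obtain hJκ | hJκ := J.toRight.eq_empty_or_nonempty
    · rw [hJι, hJκ, Finset.card_empty, Finset.card_empty] at hJ
      omega
    · have hSg := finrank_mono (le_inf hSU (le_ker_g hJκ))
      rw [hJι, Finset.card_empty] at hJ
      omega
    · have hSf := finrank_mono (le_inf hSU (le_ker_f hJι))
      rw [hJκ, Finset.card_empty] at hJ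
      omega
    · rw [le_bot_iff.1 (hfg (le_ker_f hJι) (le_ker_g hJκ)), finrank_bot]
      omega

section Descent

theorem exists_finrank_add_one_eq_and_notMem_and_notMem {X : Submodule K V} {a b : V}
    (haX : a ∈ X) (ha : a ≠ 0) (hb : b ≠ 0) :
    ∃ U ≤ X, finrank K U + 1 = finrank K X ∧ a ∉ U ∧ b ∉ U := by
  obtain ⟨φ, hφa, hφb⟩ := exists_dual_apply_ne_zero_and_apply_ne_zero (K := K) ha hb
  refine ⟨X ⊓ LinearMap.ker φ, inf_le_left, ?_, fun h => hφa h.2, fun h => hφb h.2⟩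
  have map_ne_bot : X.map φ ≠ ⊥ := (Submodule.ne_bot_iff _).2 ⟨φ a, mem_map_of_mem haX, hφa⟩
  have map_eq_top : X.map φ = ⊤ := (eq_bot_or_eq_top _).resolve_left map_ne_bot
  have hφX := finrank_map_add_finrank_inf_ker φ X
  rw [map_eq_top, finrank_top, finrank_self] at hφX
  omega

theorem map_eq_map_of_finrank_add_one_eq {f : V →ₗ[K] E} {U X : Submodule K V} {a : V}
    (hUX : U ≤ X) (hU : finrank K U + 1 = finrank K X) (haX : a ∈ X) (haU : a ∉ U)
    (hfa : f a = 0) : U.map f = X.map f := by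
  have lt_sup : U < K ∙ a ⊔ U := (covBy_span_singleton_sup haU).lt
  have sup_le_X : K ∙ a ⊔ U ≤ X := sup_le ((span_singleton_le_iff_mem a X).2 haX) hUX
  have sup_eq : K ∙ a ⊔ U = X :=
    eq_of_le_of_finrank_le sup_le_X (hU ▸ finrank_lt_finrank_of_lt lt_sup)
  rw [← sup_eq, Submodule.map_sup, map_span, Set.image_singleton, hfa, span_zero_singleton,
    bot_sup_eq]

theorem exists_ne_zero_forall_min_finrank_map_eq (f : V →ₗ[K] E) {r : ℕ} {X : Submodule K V}
    (h : min (finrank K (X.map f)) r < finrank K X) :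
    ∃ a ∈ X, a ≠ 0 ∧ ∀ U ≤ X, finrank K U + 1 = finrank K X → a ∉ U →
      min (finrank K (U.map f)) r = min (finrank K (X.map f)) r := by
  have hX := finrank_map_add_finrank_inf_ker f X
  by_cases hker : X ⊓ LinearMap.ker f = ⊥
  · have X_ne_bot : X ≠ ⊥ := by rintro rfl; simp at h
    obtain ⟨a, haX, ha⟩ := exists_mem_ne_zero_of_ne_bot X_ne_bot
    refine ⟨a, haX, ha, fun U hUX hU _ => ?_⟩
    have hUf := finrank_add_finrank_map_le hUX f
    have hmono := finrank_mono (map_mono (f := f) hUX)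
    rw [hker, finrank_bot] at hX
    omega
  · obtain ⟨a, ⟨haX, hfa⟩, ha⟩ := exists_mem_ne_zero_of_ne_bot hker
    exact ⟨a, haX, ha, fun U hUX hU haU => by
      rw [map_eq_map_of_finrank_add_one_eq hUX hU haX haU hfa]⟩

variable {f : V →ₗ[K] E} {g : V →ₗ[K] F} {r s : ℕ}

theorem exists_hyperplane_uniformImageRank_eq {X : Submodule K V}
    (h : uniformImageRank f g r s X < finrank K X) :
    ∃ U ≤ X, finrank K U + 1 = finrank K X ∧
      uniformImageRank f g r s U = uniformImageRank f g r s X := by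
  obtain ⟨a, haX, ha, hfa⟩ :=
    exists_ne_zero_forall_min_finrank_map_eq f (lt_of_le_of_lt (Nat.le_add_right _ _) h)
  obtain ⟨b, -, hb, hgb⟩ :=
    exists_ne_zero_forall_min_finrank_map_eq g (lt_of_le_of_lt (Nat.le_add_left _ _) h)
  obtain ⟨U, hUX, hU, haU, hbU⟩ := exists_finrank_add_one_eq_and_notMem_and_notMem haX ha hb
  exact ⟨U, hUX, hU, congrArg₂ (· + ·) (hfa U hUX hU haU) (hgb U hUX hU hbU)⟩

theorem exists_le_finrank_eq_min_uniformImageRank (X : Submodule K V) :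
    ∃ U ≤ X, finrank K U ≤ uniformImageRank f g r s U ∧
      finrank K U = min (finrank K X) (uniformImageRank f g r s X) := by
  induction hn : finrank K X generalizing X with
  | zero => exact ⟨X, le_rfl, by omega, by omega⟩
  | succ n ih =>
    by_cases hX : finrank K X ≤ uniformImageRank f g r s X
    · exact ⟨X, le_rfl, hX, by omega⟩
    · obtain ⟨H, hHX, hH, hrank⟩ := exists_hyperplane_uniformImageRank_eq (not_le.1 hX)
      obtain ⟨U, hUH, hU, hdim⟩ := ih H (by omega)
      exact ⟨U, hUH.trans hHX, hU, by omega⟩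

end Descent

theorem qtRank_sumElim_ker_eq {ι κ : Type*} [Fintype ι] [Fintype κ] {f : V →ₗ[K] E}
    {g : V →ₗ[K] F} (hfg : Disjoint (LinearMap.ker f) (LinearMap.ker g)) (X : Submodule K V) :
    qtRank (Sum.elim (fun _ : ι => LinearMap.ker f) (fun _ : κ => LinearMap.ker g)) X =
      min (finrank K X) (uniformImageRank f g (Fintype.card ι) (Fintype.card κ) X) := by
  refine IsGreatest.csSup_eq ⟨?_, ?_⟩
  · obtain ⟨U, hUX, hU, hdim⟩ := exists_le_finrank_eq_min_uniformImageRank (f := f) (g := g) X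
    exact ⟨U, hUX, (isPartialQT_sumElim_ker_iff hfg).2 hU, hdim⟩
  · rintro _ ⟨U, hUX, hU, rfl⟩
    exact le_min (finrank_mono hUX)
      (((isPartialQT_sumElim_ker_iff hfg).1 hU).trans (uniformImageRank.mono hUX))

end FiniteDimensional

theorem ker_fst_eq_prod (K E F : Type*) [Semiring K] [AddCommMonoid E] [Module K E]
    [AddCommMonoid F] [Module K F] :
    LinearMap.ker (LinearMap.fst K E F) = Submodule.prod ⊥ ⊤ := by
  ext; simp

theorem ker_snd_eq_prod (K E F : Type*) [Semiring K] [AddCommMonoid E] [Module K E]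
    [AddCommMonoid F] [Module K F] :
    LinearMap.ker (LinearMap.snd K E F) = Submodule.prod ⊤ ⊥ := by
  ext; simp

theorem disjoint_ker_fst_ker_snd (K E F : Type*) [Semiring K] [AddCommMonoid E] [Module K E]
    [AddCommMonoid F] [Module K F] :
    Disjoint (LinearMap.ker (LinearMap.fst K E F)) (LinearMap.ker (LinearMap.snd K E F)) :=
  disjoint_def.2 fun _ h₁ h₂ => Prod.ext h₁ h₂

theorem stmt16_general {K V E F ι κ μ : Type*} [Field K] [AddCommGroup V] [Module K V]
    [FiniteDimensional K V] [AddCommGroup E] [Module K E] [FiniteDimensional K E]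
    [AddCommGroup F] [Module K F] [FiniteDimensional K F] [Fintype ι] [Fintype κ] [Fintype μ] :
    (∀ U : Submodule K V,
        IsPartialQT (fun _ : ι => (⊥ : Submodule K V)) U ↔ finrank K U ≤ Fintype.card ι)
    ∧ (∀ X : Submodule K (E × F),
        qtRank
          (Sum.elim (fun _ : κ => Submodule.prod (⊥ : Submodule K E) (⊤ : Submodule K F))
            (fun _ : μ => Submodule.prod (⊤ : Submodule K E) (⊥ : Submodule K F))) X
        = sInf {m : ℕ | ∃ Y : Submodule K (E × F), Y ≤ X ∧
            m = min (finrank K (Y.map (LinearMap.fst K E F))) (Fintype.card κ)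
                + min (finrank K (Y.map (LinearMap.snd K E F))) (Fintype.card μ)
                + (finrank K X - finrank K Y)}) := by
  refine ⟨fun U => isPartialQT_bot_iff, fun X => ?_⟩
  have hdisj := disjoint_ker_fst_ker_snd K E F
  rw [← ker_fst_eq_prod, ← ker_snd_eq_prod, qtRank_sumElim_ker_eq hdisj]
  exact (uniformImageRank.sInf_add_finrank_sub_eq hdisj X).symm

/-- the uniform q-matroid `U_{r,n}` is the transversal q-matroid
whose presentation consists of `r` copies of the zero subspace (its independent
spaces are exactly the subspaces of dimension at most `r`), and the direct sum
`U_{r₁,n₁} ⊕ U_{r₂,n₂}` is the transversal q-matroid with presentation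
`(0⊕𝔽^{n₂}` repeated `r₁` times, `𝔽^{n₁}⊕0` repeated `r₂` times)`: its rank
function agrees with the direct-sum rank function. -/
theorem stmt16 {𝔽 : Type*} [Field 𝔽] [Fintype 𝔽] (n r n₁ r₁ n₂ r₂ : ℕ) :
    (∀ V : Submodule 𝔽 (Fin n → 𝔽),
        IsPartialQT (fun _ : Fin r => (⊥ : Submodule 𝔽 (Fin n → 𝔽))) V
          ↔ Module.finrank 𝔽 V ≤ r)
    ∧ (∀ X : Submodule 𝔽 ((Fin n₁ → 𝔽) × (Fin n₂ → 𝔽)),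
        qtRank
          (Sum.elim
            (fun _ : Fin r₁ =>
              Submodule.prod (⊥ : Submodule 𝔽 (Fin n₁ → 𝔽)) (⊤ : Submodule 𝔽 (Fin n₂ → 𝔽)))
            (fun _ : Fin r₂ =>
              Submodule.prod (⊤ : Submodule 𝔽 (Fin n₁ → 𝔽)) (⊥ : Submodule 𝔽 (Fin n₂ → 𝔽))))
          X
        = sInf {m : ℕ | ∃ Y : Submodule 𝔽 ((Fin n₁ → 𝔽) × (Fin n₂ → 𝔽)), Y ≤ X ∧
            m = min (Module.finrank 𝔽 (Y.map (LinearMap.fst 𝔽 _ _))) r₁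
                + min (Module.finrank 𝔽 (Y.map (LinearMap.snd 𝔽 _ _))) r₂
                + (Module.finrank 𝔽 X - Module.finrank 𝔽 Y)}) := by
  simpa only [Fintype.card_fin] using
    stmt16_general (K := 𝔽) (V := Fin n → 𝔽) (E := Fin n₁ → 𝔽) (F := Fin n₂ → 𝔽)
      (ι := Fin r) (κ := Fin r₁) (μ := Fin r₂)
end
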